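/- (Symplectic permutations, rotation) Let r be a positive integer and m = 2r. Let θ be the 2^{2r} × 2^{2r} permutation matrix defined on canonical basis vectors by θ e_{(v₁,v₂)} = e_{(v₂+1_r, v₁)} for v₁, v₂ ∈ (ℤ/2)^r, where 1_r is the all-ones r-tuple (θ realizes clockwise 90° rotation of a columnwise-vectorized 2^r × 2^r image). Then for all a₁, a₂, b₁, b₂ ∈ (ℤ/2)^r, θ^{-1} D((a₁,a₂),(b₁,b₂)) θ = (-1)^{1_r·b₁} D((a₂,a₁),(b₂,b₁)), where (a₁,a₂) denotes the concatenation of a₁ and a₂ into a binary 2r-tuple and 1_r·b₁ is the mod-2 inner product. -/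

import Mathlib

open Matrix

/-- Mod-2 inner product of binary tuples. -/
def bip {I : Type*} [Fintype I] (a b : I → ZMod 2) : ZMod 2 := ∑ i, a i * b i

/-- The sign `(-1)^ε` for `ε ∈ ℤ/2`: `1` if `ε = 0`, `-1` if `ε = 1`. -/
noncomputable def sgn (x : ZMod 2) : ℝ := (-1 : ℝ) ^ x.val

/-- The binary Heisenberg-Weyl signed permutation matrix `D(a,b)`
(equivalently the iterated Kronecker product of the `X^{a_i} Z^{b_i}`), with entries
`D(a,b)_{u,v} = (-1)^{b·v}` if `u = v + a` and `0` otherwise. -/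
noncomputable def Dmat {I : Type*} [Fintype I] [DecidableEq I] (a b : I → ZMod 2) :
    Matrix (I → ZMod 2) (I → ZMod 2) ℝ :=
  Matrix.of fun u v => if u = v + a then sgn (bip b v) else 0

/-- Concatenation of two binary `r`-tuples into a binary `2r`-tuple. -/
def cat2 {r : ℕ} (v₁ v₂ : Fin r → ZMod 2) : (Fin r ⊕ Fin r) → ZMod 2 :=
  Sum.elim v₁ v₂

/-- The permutation matrix `θ` with `θ e_{(v₁,v₂)} = e_{(v₂+1_r, v₁)}`, realizing
clockwise 90° rotation of a columnwise-vectorized `2^r × 2^r` image. -/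
noncomputable def theta (r : ℕ) :
    Matrix ((Fin r ⊕ Fin r) → ZMod 2) ((Fin r ⊕ Fin r) → ZMod 2) ℝ :=
  Matrix.of fun u v =>
    if u = cat2 (fun i => v (Sum.inr i) + 1) (fun i => v (Sum.inl i)) then 1 else 0

/-- The permutation of indices underlying `theta`. -/
def rotIdx {r : ℕ} (v : (Fin r ⊕ Fin r) → ZMod 2) : (Fin r ⊕ Fin r) → ZMod 2 :=
  cat2 (fun i => v (Sum.inr i) + 1) (fun i => v (Sum.inl i))

theorem rotIdx_inj {r : ℕ} : Function.Injective (@rotIdx r) := by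
  intro v w h
  funext i
  rcases i with i | i
  · simpa [rotIdx, cat2] using congrFun h (Sum.inr i)
  · simpa [rotIdx, cat2] using congrFun h (Sum.inl i)

theorem theta_apply {r : ℕ} (u v : (Fin r ⊕ Fin r) → ZMod 2) :
    theta r u v = if u = rotIdx v then 1 else 0 := rfl

theorem theta_tr_mul (r : ℕ) : (theta r)ᵀ * theta r = 1 := by
  ext u v
  simp only [Matrix.mul_apply, Matrix.transpose_apply, theta_apply, mul_ite, mul_one, mul_zero,
    Finset.sum_ite_eq', Finset.sum_ite_eq, Finset.mem_univ, if_true, Matrix.one_apply,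
    rotIdx_inj.eq_iff]
  simp only [eq_comm]

theorem sgn_add (x y : ZMod 2) : sgn (x + y) = sgn x * sgn y := by
  have h : ∀ z : ZMod 2, z = 0 ∨ z = 1 := by decide
  have h2 : (1 + 1 : ZMod 2) = 0 := by decide
  rcases h x with rfl | rfl <;> rcases h y with rfl | rfl <;> simp [sgn, h2, ZMod.val_one]

theorem Dmat_theta {r : ℕ} (a₁ a₂ b₁ b₂ : Fin r → ZMod 2) :
    Dmat (cat2 a₁ a₂) (cat2 b₁ b₂) * theta r =
      theta r * (sgn (bip (fun _ => 1) b₁) • Dmat (cat2 a₂ a₁) (cat2 b₂ b₁)) := by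
  ext u v
  have h1 : rotIdx v + cat2 a₁ a₂ = rotIdx (v + cat2 a₂ a₁) := by
    funext i
    rcases i with i | i <;> simp [rotIdx, cat2]
    ring
  have h2 : bip (cat2 b₁ b₂) (rotIdx v) = bip (fun _ => 1) b₁ + bip (cat2 b₂ b₁) v := by
    simp [bip, rotIdx, cat2, Fintype.sum_sum_type, mul_add, Finset.sum_add_distrib]
    ring
  simp only [Matrix.mul_apply, theta_apply, Dmat, Matrix.smul_apply, Matrix.of_apply, smul_eq_mul,
    mul_ite, mul_one, mul_zero, Finset.sum_ite_eq', Finset.sum_ite_eq, Finset.mem_univ, if_true,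
    h1, h2, sgn_add]
  split_ifs <;> simp

/-- Symplectic permutations, rotation:
`θ⁻¹ D((a₁,a₂),(b₁,b₂)) θ = (-1)^{1_r·b₁} D((a₂,a₁),(b₂,b₁))`. -/
theorem weyl_rotation_symplectic {r : ℕ} (hr : 0 < r) (a₁ a₂ b₁ b₂ : Fin r → ZMod 2) :
    (theta r)⁻¹ * Dmat (cat2 a₁ a₂) (cat2 b₁ b₂) * theta r =
      sgn (bip (fun _ => 1) b₁) • Dmat (cat2 a₂ a₁) (cat2 b₂ b₁) := by
  have hu : IsUnit (theta r).det := Matrix.isUnit_det_of_left_inverse (theta_tr_mul r)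
  rw [Matrix.mul_assoc, Dmat_theta, Matrix.nonsing_inv_mul_cancel_left _ _ hu]
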